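/- Let V be a commutative ring and m ⊆ V an ideal satisfying m·m = m such that m̃ = m ⊗_V m is a flat V-module, and let R be a commutative V-algebra. Then: (i) for all R-modules M and N, the natural map (m̃ ⊗_V M) ⊗_R (m̃ ⊗_V N) → m̃ ⊗_V (M ⊗_R N), induced on elementary tensors by ((x ⊗ y) ⊗ s) ⊗ ((x' ⊗ y') ⊗ t) ↦ (x x' ⊗ y y') ⊗ (s ⊗ t), is an isomorphism; (ii) if M is an almost flat R-module, then m̃ ⊗_V M is a flat R-module. -/

import Mathlib

/-!
If `m T = T`, then `T ⊗_V A = 0` for every `A` killed by `m`, since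
`(a t) ⊗ x = t ⊗ (a x) = 0` for `a ∈ m`. So tensoring with `T` turns a surjection whose kernel is
killed by `m` into an isomorphism, and, if `T` is flat, any map whose kernel is killed by `m` into
an injection.

The multiplication `μ : m ⊗_V m → m` is surjective as `m² = m`, and `a z = a ⊗ μ z` shows that `m`
kills its kernel. Since `m` and `m̃` satisfy `m T = T`, the map `m̃ ⊗_V m̃ → m̃` built from two
copies of `μ` is an isomorphism, and so is its base change to `M ⊗_R N`.

For an injection `A → B` of `R`-modules, the kernel of `M ⊗_R A → M ⊗_R B` is a quotient of
`Tor_1^R(M, B / A)`, hence killed by `m` if `M` is almost flat. Tensoring with the flat module `m̃`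
makes the map injective.
-/

universe u v

open scoped TensorProduct
open CategoryTheory

set_option maxHeartbeats 1000000
set_option synthInstance.maxHeartbeats 200000

section

variable (V : Type v) [CommRing V] (m : Ideal V)

/-- Multiplication `m × m → m` of elements of the ideal `m`. -/
def idealMulBilin : (m : Type v) →ₗ[V] (m : Type v) →ₗ[V] (m : Type v) :=
  LinearMap.mk₂ V (fun x y => (⟨(x : V) * (y : V), Ideal.mul_mem_left m _ y.2⟩ : m))
    (fun x x' y => Subtype.ext (by push_cast; ring))
    (fun c x y => Subtype.ext (by push_cast [smul_eq_mul]; ring))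
    (fun x y y' => Subtype.ext (by push_cast; ring))
    (fun c x y => Subtype.ext (by push_cast [smul_eq_mul]; ring))

/-- The multiplication map `m̃ ⊗_V m̃ → m̃`, `(x ⊗ y) ⊗ (x' ⊗ y') ↦ (x x') ⊗ (y y')`. -/
noncomputable def tildeMul :
    (TensorProduct V m m) ⊗[V] (TensorProduct V m m) →ₗ[V] TensorProduct V m m :=
  (TensorProduct.map (TensorProduct.lift (idealMulBilin V m))
      (TensorProduct.lift (idealMulBilin V m))).comp
    (TensorProduct.tensorTensorTensorComm V m m m m).toLinearMap

variable (R : Type u) [CommRing R] [Algebra V R]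
variable (M : Type u) [AddCommGroup M] [Module V M] [Module R M] [IsScalarTower V R M]

/-- The `R`-module structure on `m̃ ⊗_V M` induced by the `R`-action on the second
factor. -/
noncomputable instance (priority := 100) tildeTensorModule :
    Module R (TensorProduct V (TensorProduct V m m) M) where
  smul r x :=
    LinearMap.lTensor (TensorProduct V m m) ((LinearMap.lsmul R M r).restrictScalars V) x
  one_smul x := by
    show LinearMap.lTensor (TensorProduct V m m)
      ((LinearMap.lsmul R M 1).restrictScalars V) x = x
    have h : (LinearMap.lsmul R M 1).restrictScalars V = LinearMap.id := by ext; simp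
    rw [h, LinearMap.lTensor_id, LinearMap.id_apply]
  mul_smul r s x := by
    have h : (LinearMap.lsmul R M (r * s)).restrictScalars V =
        ((LinearMap.lsmul R M r).restrictScalars V).comp
          ((LinearMap.lsmul R M s).restrictScalars V) := by
      ext y
      show (r * s) • y = r • s • y
      rw [mul_smul]
    show LinearMap.lTensor (TensorProduct V m m)
        ((LinearMap.lsmul R M (r * s)).restrictScalars V) x = _
    rw [h, LinearMap.lTensor_comp]
    rfl
  smul_zero r := map_zero _
  smul_add r x y := map_add _ x y
  add_smul r s x := by
    have h : (LinearMap.lsmul R M (r + s)).restrictScalars V =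
        (LinearMap.lsmul R M r).restrictScalars V +
          (LinearMap.lsmul R M s).restrictScalars V := by
      ext y; simp [add_smul]
    show LinearMap.lTensor (TensorProduct V m m)
        ((LinearMap.lsmul R M (r + s)).restrictScalars V) x = _
    rw [h, LinearMap.lTensor_add]
    rfl
  zero_smul x := by
    show LinearMap.lTensor (TensorProduct V m m)
      ((LinearMap.lsmul R M 0).restrictScalars V) x = 0
    have h : (LinearMap.lsmul R M 0).restrictScalars V = 0 := by ext; simp
    rw [h, LinearMap.lTensor_zero, LinearMap.zero_apply]

variable (N : Type u) [AddCommGroup N] [Module V N] [Module R N] [IsScalarTower V R N]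

instance : SMulCommClass R V M := SMulCommClass.symm V R M
instance : SMulCommClass R V N := SMulCommClass.symm V R N

/-- The canonical map `M ⊗_V N → M ⊗_R N`. -/
noncomputable def baseChangeTensor : (M ⊗[V] N) →ₗ[V] (M ⊗[R] N) :=
  TensorProduct.lift
    (LinearMap.mk₂ V (fun s t => s ⊗ₜ[R] t)
      (fun s s' t => TensorProduct.add_tmul s s' t)
      (fun c s t => (TensorProduct.smul_tmul' c s t).symm)
      (fun s t t' => TensorProduct.tmul_add s t t')
      (fun c s t => by
        show s ⊗ₜ[R] (c • t) = c • (s ⊗ₜ[R] t)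
        rw [TensorProduct.smul_tmul', algebra_compatible_smul R c t,
          algebra_compatible_smul R c s]
        exact (TensorProduct.smul_tmul _ _ _).symm))

/-- The canonical `V`-bilinear map
`(m̃ ⊗_V M) × (m̃ ⊗_V N) → m̃ ⊗_V (M ⊗_R N)`,
`((x ⊗ y) ⊗ s, (x' ⊗ y') ⊗ t) ↦ (x x' ⊗ y y') ⊗ (s ⊗ t)`. -/
noncomputable def tildeTensorMulBilin :
    (TensorProduct V (TensorProduct V m m) M) →ₗ[V]
      (TensorProduct V (TensorProduct V m m) N) →ₗ[V]
        TensorProduct V (TensorProduct V m m) (M ⊗[R] N) :=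
  TensorProduct.curry
    ((TensorProduct.map (tildeMul V m) (baseChangeTensor V R M N)).comp
      (TensorProduct.tensorTensorTensorComm V (TensorProduct V m m) M
        (TensorProduct V m m) N).toLinearMap)

/-- The canonical additive map
`(m̃ ⊗_V M) ⊗_R (m̃ ⊗_V N) → m̃ ⊗_V (M ⊗_R N)` induced on elementary tensors by
`((x ⊗ y) ⊗ s) ⊗ ((x' ⊗ y') ⊗ t) ↦ (x x' ⊗ y y') ⊗ (s ⊗ t)`. -/
noncomputable def tildeTensorMul :
    ((TensorProduct V (TensorProduct V m m) M) ⊗[R]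
        (TensorProduct V (TensorProduct V m m) N)) →+
      TensorProduct V (TensorProduct V m m) (M ⊗[R] N) :=
  TensorProduct.liftAddHom
    { toFun := fun x => (tildeTensorMulBilin V m R M N x).toAddMonoidHom
      map_zero' := by ext t; simp
      map_add' := fun x y => by ext t; simp }
    (by
      intro r x y
      show tildeTensorMulBilin V m R M N
          (LinearMap.lTensor (TensorProduct V m m)
            ((LinearMap.lsmul R M r).restrictScalars V) x) y =
        tildeTensorMulBilin V m R M N x
          (LinearMap.lTensor (TensorProduct V m m)
            ((LinearMap.lsmul R N r).restrictScalars V) y)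
      induction x using TensorProduct.induction_on with
      | zero => simp
      | tmul k s =>
        induction y using TensorProduct.induction_on with
        | zero => simp
        | tmul k' t =>
          show tildeTensorMulBilin V m R M N (k ⊗ₜ[V] (r • s)) (k' ⊗ₜ[V] t) =
            tildeTensorMulBilin V m R M N (k ⊗ₜ[V] s) (k' ⊗ₜ[V] (r • t))
          simp only [tildeTensorMulBilin, TensorProduct.curry_apply,
            LinearMap.comp_apply, LinearEquiv.coe_coe,
            TensorProduct.tensorTensorTensorComm_tmul, TensorProduct.map_tmul,
            baseChangeTensor, TensorProduct.lift.tmul, LinearMap.mk₂_apply]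
          rw [TensorProduct.smul_tmul]
        | add y1 y2 h1 h2 => simp only [map_add, LinearMap.map_add, h1, h2]
      | add x1 x2 h1 h2 =>
        simp only [map_add, LinearMap.map_add, LinearMap.add_apply, h1, h2])

/-- Almost flat module: `m·Tor_1^R(M, N) = 0` for all `N`. -/
def IsAlmostFlat (M' : Type u) [AddCommGroup M'] [Module R M'] : Prop :=
  ∀ P : ModuleCat.{u} R, ∀ a ∈ m,
    ∀ x : ((Tor (ModuleCat.{u} R) 1).obj (ModuleCat.of R M')).obj P,
      algebraMap V R a • x = 0

section Tor

universe w

variable {R}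

theorem isTorsionBy_of_injective {A B : Type*} [AddCommGroup A] [Module R A] [AddCommGroup B]
    [Module R B] {f : A →ₗ[R] B} (hf : Function.Injective f) {a : R}
    (hB : Module.IsTorsionBy R B a) : Module.IsTorsionBy R A a := fun x ↦
  hf <| by rw [map_smul, map_zero, @hB (f x)]

theorem exists_f_eq_smul_of_isTorsionBy_homology {S : ShortComplex (ModuleCat.{w} R)} {a : R}
    (h : Module.IsTorsionBy R S.homology a) {x : S.X₂} (hx : S.g x = 0) :
    ∃ y, S.f y = a • x := by
  let cycle : LinearMap.ker S.g.hom := ⟨x, hx⟩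
  have hH : Module.IsTorsionBy R S.moduleCatLeftHomologyData.H a :=
    isTorsionBy_of_injective S.moduleCatHomologyIso.symm.toLinearEquiv.injective h
  obtain ⟨y, hy⟩ := (Submodule.Quotient.mk_eq_zero (LinearMap.range S.moduleCatToCycles)).mp
    (@hH (Submodule.Quotient.mk cycle))
  exact ⟨y, congrArg Subtype.val hy⟩

variable {M}

theorem exists_lTensor_d_eq_smul_of_isTorsionBy_tor {P : ModuleCat.{u} R}
    (Q : ProjectiveResolution P) {n : ℕ} {a : R}
    (h : Module.IsTorsionBy R (((Tor (ModuleCat.{u} R) (n + 1)).obj (ModuleCat.of R M)).obj P) a)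
    {x : M ⊗[R] Q.complex.X (n + 1)} (hx : (Q.complex.d (n + 1) n).hom.lTensor M x = 0) :
    ∃ y, (Q.complex.d (n + 2) (n + 1)).hom.lTensor M y = a • x := by
  let F := (MonoidalCategory.tensoringLeft (ModuleCat.{u} R)).obj (ModuleCat.of R M)
  let K := (F.mapHomologicalComplex (ComplexShape.down ℕ)).obj Q.complex
  let torIso := Q.isoLeftDerivedObj F (n + 1) ≪≫
    ShortComplex.homologyMapIso (K.isoSc' (n + 2) (n + 1) n (by simp) (by simp))
  have hK : Module.IsTorsionBy R (K.sc' (n + 2) (n + 1) n).homology a :=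
    isTorsionBy_of_injective torIso.symm.toLinearEquiv.injective h
  exact exists_f_eq_smul_of_isTorsionBy_homology hK hx

theorem exists_lTensor_eq_of_lTensor_eq_zero {L Q₁ Q₀ A B P : Type*}
    [AddCommGroup L] [Module R L] [AddCommGroup Q₁] [Module R Q₁] [AddCommGroup Q₀] [Module R Q₀]
    [AddCommGroup A] [Module R A] [AddCommGroup B] [Module R B] [AddCommGroup P] [Module R P]
    {d : Q₁ →ₗ[R] Q₀} {p : Q₀ →ₗ[R] P} {f : A →ₗ[R] B} {g : B →ₗ[R] P}
    {φ₁ : Q₁ →ₗ[R] A} {φ₀ : Q₀ →ₗ[R] B} (hdp : Function.Exact d p)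
    (hp : Function.Surjective p) (hf : Function.Injective f) (hfg : Function.Exact f g)
    (h₁ : f ∘ₗ φ₁ = φ₀ ∘ₗ d) (h₀ : g ∘ₗ φ₀ = p) {z : L ⊗[R] A} (hz : f.lTensor L z = 0) :
    ∃ w, d.lTensor L w = 0 ∧ φ₁.lTensor L w = z := by
  have h₁' := LinearMap.congr_fun h₁
  have h₀' := LinearMap.congr_fun h₀
  simp only [LinearMap.comp_apply] at h₁' h₀'
  -- The left square is cocartesian, a property that survives tensoring.
  have hexact : Function.Exact ((-d).prod φ₁) (φ₀.coprod f) := by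
    rintro ⟨q, a⟩
    constructor
    · intro hqa
      have hqa : φ₀ q + f a = 0 := hqa
      obtain ⟨x, rfl⟩ : q ∈ Set.range d := by
        rw [← hdp q, ← h₀', eq_neg_of_add_eq_zero_left hqa, map_neg, hfg.apply_apply_eq_zero,
          neg_zero]
      refine ⟨-x, Prod.ext (by simp) (hf ?_)⟩
      simpa [h₁'] using neg_eq_of_add_eq_zero_right hqa
    · rintro ⟨x, hx⟩
      simp [← hx, h₁']
  have hsurj : Function.Surjective (φ₀.coprod f) := by
    intro b
    obtain ⟨q, hq⟩ := hp (g b)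
    obtain ⟨a, ha⟩ := (hfg (b - φ₀ q)).mp (by rw [map_sub, h₀', hq, sub_self])
    exact ⟨(q, a), by simp [ha]⟩
  obtain ⟨w, hw⟩ := (lTensor_exact L hexact hsurj ((LinearMap.inr R Q₀ A).lTensor L z)).mp <| by
    rw [← LinearMap.lTensor_comp_apply, LinearMap.coprod_inr, hz]
  refine ⟨w, ?_, ?_⟩
  · simpa [← LinearMap.lTensor_comp_apply, LinearMap.fst_prod, LinearMap.lTensor_neg] using
      congrArg ((LinearMap.fst R Q₀ A).lTensor L) hw
  · simpa [← LinearMap.lTensor_comp_apply, LinearMap.snd_prod] using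
      congrArg ((LinearMap.snd R Q₀ A).lTensor L) hw

theorem isTorsionBy_ker_lTensor_of_isTorsionBy_tor {A : Type*} {B P : Type u}
    [AddCommGroup A] [Module R A] [AddCommGroup B] [Module R B] [AddCommGroup P] [Module R P]
    {f : A →ₗ[R] B} {g : B →ₗ[R] P} (hf : Function.Injective f) (hfg : Function.Exact f g)
    (hg : Function.Surjective g) {a : R}
    (h : Module.IsTorsionBy R
      (((Tor (ModuleCat.{u} R) 1).obj (ModuleCat.of R M)).obj (ModuleCat.of R P)) a) :
    Module.IsTorsionBy R (LinearMap.ker (f.lTensor M)) a := by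
  rintro ⟨z, hz⟩
  let Q := projectiveResolution (ModuleCat.of R P)
  let d₁ := (Q.complex.d 1 0).hom
  let d₂ := (Q.complex.d 2 1).hom
  let p : Q.complex.X 0 →ₗ[R] P := (Q.π.f 0).hom
  have hp : Function.Surjective p :=
    (ModuleCat.epi_iff_surjective (Q.π.f 0)).mp inferInstance
  have hd₁p : Function.Exact d₁ p :=
    (ShortComplex.ShortExact.moduleCat_exact_iff_function_exact _).mp Q.exact₀
  have hd₂d₁ : Function.Exact d₂ d₁ :=
    (ShortComplex.ShortExact.moduleCat_exact_iff_function_exact _).mp (Q.exact_succ 0)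
  have : Module.Projective R (Q.complex.X 0) :=
    (IsProjective.iff_projective (Q.complex.X 0)).mpr (Q.projective 0)
  obtain ⟨φ₀, hφ₀⟩ := Module.projective_lifting_property g p hg
  let φ₁ : Q.complex.X 1 →ₗ[R] A := (φ₀ ∘ₗ d₁).codRestrictOfInjective f hf fun x ↦
    (hfg _).mp <| by
      rw [LinearMap.comp_apply, ← LinearMap.comp_apply, hφ₀, hd₁p.apply_apply_eq_zero]
  have hφ₁ : f ∘ₗ φ₁ = φ₀ ∘ₗ d₁ := LinearMap.codRestrictOfInjective_comp ..
  have hφ₁d₂ : φ₁ ∘ₗ d₂ = 0 := by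
    ext x
    apply hf
    simp [← LinearMap.comp_apply f φ₁, hφ₁, hd₂d₁.apply_apply_eq_zero]
  obtain ⟨w, hd₁w, rfl⟩ := exists_lTensor_eq_of_lTensor_eq_zero hd₁p hp hf hfg hφ₁ hφ₀ hz
  obtain ⟨y, hy⟩ := exists_lTensor_d_eq_smul_of_isTorsionBy_tor Q h hd₁w
  apply Subtype.ext
  change a • φ₁.lTensor M w = 0
  rw [← map_smul, ← hy, ← LinearMap.lTensor_comp_apply]
  change (φ₁ ∘ₗ d₂).lTensor M y = 0
  rw [hφ₁d₂, LinearMap.lTensor_zero, LinearMap.zero_apply]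

end Tor

section Torsion

variable {V} {I : Ideal V} {T A B : Type*} [AddCommGroup T] [Module V T]
  [AddCommGroup A] [Module V A] [AddCommGroup B] [Module V B]

theorem subsingleton_tensorProduct_of_isTorsionBySet (hT : I • (⊤ : Submodule V T) = ⊤)
    (hA : Module.IsTorsionBySet V A I) : Subsingleton (T ⊗[V] A) := by
  have hmk : TensorProduct.mk V T A = 0 := by
    rw [← LinearMap.ker_eq_top, eq_top_iff, ← hT, Submodule.smul_le]
    intro a ha t _
    ext x
    simpa using congrArg (t ⊗ₜ[V] ·) (@hA x ⟨a, ha⟩)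
  refine subsingleton_of_forall_eq 0 fun z ↦ ?_
  induction z with
  | zero => rfl
  | add x y hx hy => rw [hx, hy, add_zero]
  | tmul t x => exact LinearMap.congr_fun₂ hmk t x

theorem lTensor_bijective_of_isTorsionBySet_ker (hT : I • (⊤ : Submodule V T) = ⊤)
    {f : A →ₗ[V] B} (hf : Function.Surjective f)
    (hker : Module.IsTorsionBySet V (LinearMap.ker f) I) :
    Function.Bijective (f.lTensor T) := by
  have := subsingleton_tensorProduct_of_isTorsionBySet hT hker
  refine ⟨(injective_iff_map_eq_zero _).mpr fun x hx ↦ ?_, f.lTensor_surjective T hf⟩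
  obtain ⟨y, rfl⟩ := (lTensor_exact T f.exact_subtype_ker_map hf x).mp hx
  rw [Subsingleton.elim y 0, map_zero]

theorem lTensor_injective_of_isTorsionBySet_ker [Module.Flat V T]
    (hT : I • (⊤ : Submodule V T) = ⊤) {f : A →ₗ[V] B}
    (hker : Module.IsTorsionBySet V (LinearMap.ker f) I) :
    Function.Injective (f.lTensor T) := by
  have := subsingleton_tensorProduct_of_isTorsionBySet hT hker
  refine (injective_iff_map_eq_zero _).mpr fun x hx ↦ ?_
  obtain ⟨y, rfl⟩ := (Module.Flat.lTensor_exact T f.exact_subtype_ker_map x).mp hx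
  rw [Subsingleton.elim y 0, map_zero]

theorem ideal_smul_top_eq_top (hI : IsIdempotentElem I) : I • (⊤ : Submodule V I) = ⊤ := by
  apply Submodule.map_injective_of_injective I.injective_subtype
  rw [Submodule.map_smul'', Submodule.map_top, Submodule.range_subtype]
  exact hI

theorem smul_top_tensorProduct_eq_top (hT : I • (⊤ : Submodule V T) = ⊤) :
    I • (⊤ : Submodule V (T ⊗[V] A)) = ⊤ := by
  have hcomap (x : A) :
      ⊤ ≤ (I • ⊤ : Submodule V (T ⊗[V] A)).comap ((TensorProduct.mk V T A).flip x) := by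
    rw [← hT, Submodule.smul_le]
    intro a ha t _
    exact Submodule.smul_mem_smul ha (Submodule.mem_top (x := t ⊗ₜ[V] x))
  refine eq_top_iff.mpr <| (TensorProduct.span_tmul_eq_top V T A).ge.trans <|
    Submodule.span_le.mpr ?_
  rintro _ ⟨t, x, rfl⟩
  exact hcomap x Submodule.mem_top

end Torsion

section TildeMul

variable {V m}

theorem lift_idealMulBilin_surjective (hm : IsIdempotentElem m) :
    Function.Surjective (TensorProduct.lift (idealMulBilin V m)) := by
  rw [← LinearMap.range_eq_top, eq_top_iff, ← ideal_smul_top_eq_top hm, Submodule.smul_le]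
  intro a ha x _
  exact ⟨⟨a, ha⟩ ⊗ₜ x, rfl⟩

theorem coe_smul_eq_tmul_lift_idealMulBilin (a : m) (z : m ⊗[V] m) :
    (a : V) • z = a ⊗ₜ TensorProduct.lift (idealMulBilin V m) z := by
  induction z with
  | zero => simp
  | add x y hx hy => rw [smul_add, hx, hy, map_add, TensorProduct.tmul_add]
  | tmul x y =>
    have hcomm : (a : V) • x = (x : V) • a := Subtype.ext (mul_comm _ _)
    rw [TensorProduct.smul_tmul', hcomm, TensorProduct.smul_tmul]
    rfl

theorem isTorsionBySet_ker_lift_idealMulBilin :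
    Module.IsTorsionBySet V (LinearMap.ker (TensorProduct.lift (idealMulBilin V m))) m := by
  rintro ⟨z, hz⟩ a
  apply Subtype.ext
  change (a : V) • z = 0
  rw [coe_smul_eq_tmul_lift_idealMulBilin a z, hz, TensorProduct.tmul_zero]

theorem tildeMul_bijective (hm : IsIdempotentElem m) : Function.Bijective (tildeMul V m) := by
  let μ := TensorProduct.lift (idealMulBilin V m)
  have lTensor_bijective {T : Type v} [AddCommGroup T] [Module V T]
      (hT : m • (⊤ : Submodule V T) = ⊤) : Function.Bijective (μ.lTensor T) :=
    lTensor_bijective_of_isTorsionBySet_ker hT (lift_idealMulBilin_surjective hm)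
      isTorsionBySet_ker_lift_idealMulBilin
  have hm_top := ideal_smul_top_eq_top hm
  have hmap : Function.Bijective (TensorProduct.map μ μ) := by
    rw [← LinearMap.rTensor_comp_lTensor, LinearMap.coe_comp]
    refine .comp ?_ (lTensor_bijective (smul_top_tensorProduct_eq_top hm_top))
    rw [← LinearMap.lTensor_bij_iff_rTensor_bij]
    exact lTensor_bijective hm_top
  exact hmap.comp (TensorProduct.tensorTensorTensorComm V m m m m).bijective

end TildeMul

/-- The swap `m̃ ⊗_V M ≃ M ⊗_V m̃`, linear over `R` for the action of `R` on `M`. It identifies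
`tildeTensorModule` with Mathlib's left module structure on `M ⊗_V m̃`. -/
noncomputable def tildeTensorComm :
    (m ⊗[V] m) ⊗[V] M ≃ₗ[R] M ⊗[V] (m ⊗[V] m) where
  __ := TensorProduct.comm V (m ⊗[V] m) M
  map_smul' r x := by
    change TensorProduct.comm V _ M (((LinearMap.lsmul R M r).restrictScalars V).lTensor _ x) =
      r • TensorProduct.comm V _ M x
    induction x with
    | zero => simp
    | add x y hx hy => rw [map_add, map_add, hx, hy, map_add, smul_add]
    | tmul t s => rfl

/-- The interchange `(m̃ ⊗_V M) ⊗_R (m̃ ⊗_V N) ≃ (m̃ ⊗_V m̃) ⊗_V (M ⊗_R N)`, which exhibits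
`tildeTensorMul` as a base change of `tildeMul`. -/
noncomputable def tildeTensorTensorTensorComm :
    ((m ⊗[V] m) ⊗[V] M) ⊗[R] ((m ⊗[V] m) ⊗[V] N) ≃+
      ((m ⊗[V] m) ⊗[V] (m ⊗[V] m)) ⊗[V] (M ⊗[R] N) :=
  ((TensorProduct.congr (tildeTensorComm V m R M) (tildeTensorComm V m R N)).trans
    (TensorProduct.AlgebraTensorModule.tensorTensorTensorComm V V R R M (m ⊗[V] m) N
      (m ⊗[V] m))).toAddEquiv.trans (TensorProduct.comm V _ _).toAddEquiv

theorem tildeTensorMul_eq_rTensor_tildeMul (z : ((m ⊗[V] m) ⊗[V] M) ⊗[R] ((m ⊗[V] m) ⊗[V] N)) :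
    tildeTensorMul V m R M N z =
      (tildeMul V m).rTensor (M ⊗[R] N) (tildeTensorTensorTensorComm V m R M N z) := by
  induction z with
  | zero => simp
  | add z z' hz hz' => simp only [map_add, hz, hz']
  | tmul x y =>
    induction x with
    | zero => simp
    | add x x' hx hx' => simp only [map_add, TensorProduct.add_tmul, hx, hx']
    | tmul k s =>
      induction y with
      | zero => simp
      | add y y' hy hy' => simp only [map_add, TensorProduct.tmul_add, hy, hy']
      | tmul k' t => rfl

theorem tildeTensorMul_bijective (hm : IsIdempotentElem m) :
    Function.Bijective (tildeTensorMul V m R M N) := by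
  rw [funext (tildeTensorMul_eq_rTensor_tildeMul V m R M N)]
  exact (((LinearEquiv.ofBijective _ (tildeMul_bijective hm)).rTensor (M ⊗[R] N)).bijective).comp
    (tildeTensorTensorTensorComm V m R M N).bijective

section AlmostFlat

variable {V m R M}

theorem IsAlmostFlat.isTorsionBySet_ker_lTensor (h : IsAlmostFlat V m R M) {A : Type*} {B : Type u}
    [AddCommGroup A] [Module R A] [AddCommGroup B] [Module R B]
    {f : A →ₗ[R] B} (hf : Function.Injective f) :
    Module.IsTorsionBySet V (LinearMap.ker ((f.lTensor M).restrictScalars V)) m := by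
  rintro ⟨z, hz⟩ ⟨a, ha⟩
  have htorsion := isTorsionBy_ker_lTensor_of_isTorsionBy_tor hf f.exact_map_mkQ_range
    (Submodule.mkQ_surjective _) (fun {x} ↦ h _ a ha x)
  apply Subtype.ext
  change a • z = 0
  rw [algebra_compatible_smul R]
  exact congrArg Subtype.val (htorsion (x := ⟨z, hz⟩))

theorem rightComm_comp_lTensor {L T A B : Type*} [AddCommGroup L] [Module V L] [Module R L]
    [IsScalarTower V R L] [AddCommGroup T] [Module V T] [AddCommGroup A] [Module R A]
    [AddCommGroup B] [Module R B] (f : A →ₗ[R] B) :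
    TensorProduct.AlgebraTensorModule.rightComm R V R L T B ∘ f.lTensor (L ⊗[V] T) =
      ((f.lTensor L).restrictScalars V).rTensor T ∘
        TensorProduct.AlgebraTensorModule.rightComm R V R L T A := by
  funext z
  simp only [Function.comp_apply]
  induction z with
  | zero => simp
  | add z z' hz hz' => simp only [map_add, hz, hz']
  | tmul x y =>
    induction x with
    | zero => simp
    | add x x' hx hx' => simp only [map_add, TensorProduct.add_tmul, hx, hx']
    | tmul s t => rfl

theorem IsAlmostFlat.flat_tensorProduct (h : IsAlmostFlat V m R M) {T : Type*} [AddCommGroup T]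
    [Module V T] [Module.Flat V T] (hT : m • (⊤ : Submodule V T) = ⊤) :
    Module.Flat R (M ⊗[V] T) := by
  rw [Module.Flat.iff_lTensor_injective']
  intro I
  let f := (I.subtype.lTensor M).restrictScalars V
  have hf : Function.Injective (f.rTensor T) := by
    rw [← LinearMap.lTensor_inj_iff_rTensor_inj]
    exact lTensor_injective_of_isTorsionBySet_ker hT
      (h.isTorsionBySet_ker_lTensor I.injective_subtype)
  refine .of_comp (f := TensorProduct.AlgebraTensorModule.rightComm R V R M T R) ?_
  rw [rightComm_comp_lTensor]
  exact hf.comp (LinearEquiv.injective _)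

end AlmostFlat

theorem tildeTensorMul_bijective_and_flat_general (hm : m * m = m) :
    Function.Bijective (tildeTensorMul V m R M N) ∧
      (Module.Flat V (m ⊗[V] m) → IsAlmostFlat V m R M →
        Module.Flat R ((m ⊗[V] m) ⊗[V] M)) := by
  refine ⟨tildeTensorMul_bijective V m R M N hm, fun _ h ↦ ?_⟩
  have : Module.Flat R (M ⊗[V] (m ⊗[V] m)) :=
    h.flat_tensorProduct (smul_top_tensorProduct_eq_top (ideal_smul_top_eq_top hm))
  exact .of_linearEquiv (tildeTensorComm V m R M)

/-- Let `m·m = m` with `m̃ = m ⊗_V m` flat over `V`, and let `R` be a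
commutative `V`-algebra.  Then:
(i) for all `R`-modules `M, N`, the natural map
`(m̃ ⊗_V M) ⊗_R (m̃ ⊗_V N) → m̃ ⊗_V (M ⊗_R N)` is an isomorphism;
(ii) if `M` is an almost flat `R`-module, then `m̃ ⊗_V M` is a flat `R`-module. -/
theorem tildeTensorMul_bijective_and_flat
    (hm : m * m = m) (hflat : Module.Flat V (TensorProduct V m m)) :
    Function.Bijective (tildeTensorMul V m R M N) ∧
      (IsAlmostFlat V m R M →
        Module.Flat R (TensorProduct V (TensorProduct V m m) M)) := by
  have h := tildeTensorMul_bijective_and_flat_general V m R M N hm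
  exact ⟨h.1, h.2 hflat⟩

end
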